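/- arXiv:1905.02310 — 2 statements merged into one kernel-verified Lean document; each statement's English description precedes it below -/
import Mathlib

section
/- Let (R, m) be a regular local ring of dimension two and I an m-primary ideal. Then I is a Burch ideal if and only if μ(mI) < 2μ(I), where μ denotes the minimal number of generators. -/
open IsLocalRing

/-- The minimal number of generators of an ideal. -/
noncomputable def muGen {R : Type*} [CommRing R] (I : Ideal R) : ℕ :=
  sInf {c : ℕ | ∃ s : Finset R, s.card = c ∧ Ideal.span (s : Set R) = I}

lemma muGen_eq_spanFinrank {R : Type*} [CommRing R] [IsNoetherianRing R] (I : Ideal R) :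
    muGen I = Submodule.spanFinrank I := by
  have hI : Submodule.FG I := IsNoetherian.noetherian I
  obtain ⟨s, hs, hs'⟩ := hI.exists_span_finset_card_eq_spanFinrank
  apply le_antisymm
  · exact Nat.sInf_le ⟨s, hs, hs'⟩
  · refine le_csInf ⟨_, s, hs, hs'⟩ ?_
    rintro c ⟨t, rfl, rfl⟩
    have := Submodule.spanFinrank_span_le_ncard_of_finite (R := R) (t.finite_toSet)
    simpa [Set.ncard_coe_finset] using this

section reg

variable {R : Type*} [CommRing R] [IsNoetherianRing R] [IsLocalRing R]

lemma pow_notMem_span (hdim : ringKrullDim R = 2) {x y : R}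
    (hm : maximalIdeal R = Ideal.span {x, y}) (n : ℕ) : x ^ n ∉ Ideal.span {y} := by
  intro h
  have hy : y ∈ maximalIdeal R := by rw [hm]; exact Ideal.subset_span (by simp)
  have hmin : maximalIdeal R ∈ (Ideal.span {y}).minimalPrimes := by
    refine ⟨⟨inferInstance, by rwa [Ideal.span_singleton_le_iff_mem]⟩, ?_⟩
    rintro q ⟨hq, hyq⟩ -
    rw [hm, Ideal.span_le]
    rintro z (rfl | rfl)
    · exact hq.mem_of_pow_mem n (hyq h)
    · exact hyq (Ideal.mem_span_singleton_self _)
  have h1 := Ideal.height_le_one_of_isPrincipal_of_mem_minimalPrimes _ _ hmin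
  have h2 := IsLocalRing.maximalIdeal_height_eq_ringKrullDim (R := R)
  rw [hdim] at h2
  have h3 : (maximalIdeal R).height = 2 := WithBot.coe_injective h2
  rw [h3] at h1
  exact absurd h1 (by decide)

lemma exists_unit_form {x y : R}
    (hm : maximalIdeal R = Ideal.span {x, y}) {a : R} (ha : a ∉ Ideal.span {y}) :
    ∃ n u s, IsUnit u ∧ a = x ^ n * u + y * s := by
  by_contra! hcon
  apply ha
  have key : ∀ n, ∃ r s, a = x ^ n * r + y * s := by
    intro n
    induction n with
    | zero => exact ⟨a, 0, by simp⟩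
    | succ n ih =>
      obtain ⟨r, s, h⟩ := ih
      have hr : r ∈ maximalIdeal R := by
        rw [mem_maximalIdeal, mem_nonunits_iff]
        exact fun hu => hcon n r s hu h
      rw [hm, Ideal.mem_span_pair] at hr
      obtain ⟨c, d, rfl⟩ := hr
      exact ⟨c, s + x ^ n * d, by rw [h]; ring⟩
  have hy : Ideal.span {y} ≠ ⊤ := by
    apply ne_top_of_le_ne_top (Ideal.IsPrime.ne_top' (I := maximalIdeal R))
    rw [hm]; exact Ideal.span_mono (by simp)
  have hx : x ∈ maximalIdeal R := by rw [hm]; exact Ideal.subset_span (by simp)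
  have : Nontrivial (R ⧸ Ideal.span {y}) := Ideal.Quotient.nontrivial_iff.mpr hy
  have : IsLocalRing (R ⧸ Ideal.span {y}) :=
    .of_surjective' (Ideal.Quotient.mk _) Ideal.Quotient.mk_surjective
  rw [← Ideal.Quotient.eq_zero_iff_mem, ← Ideal.mem_bot,
    ← Ideal.iInf_pow_eq_bot_of_isLocalRing
      (Ideal.map (Ideal.Quotient.mk (Ideal.span {y})) (maximalIdeal R)) ?_, Ideal.mem_iInf]
  · intro n
    obtain ⟨r, s, h⟩ := key n
    have : Ideal.Quotient.mk (Ideal.span {y}) a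
        = (Ideal.Quotient.mk (Ideal.span {y}) x) ^ n * Ideal.Quotient.mk (Ideal.span {y}) r := by
      rw [← map_pow, ← map_mul, Ideal.Quotient.eq, h, Ideal.mem_span_singleton]
      exact ⟨s, by ring⟩
    rw [this]
    exact Ideal.mul_mem_right _ _ (Ideal.pow_mem_pow (Ideal.mem_map_of_mem _ hx) n)
  · intro htop
    have := Ideal.comap_map_of_surjective (Ideal.Quotient.mk (Ideal.span {y}))
      Ideal.Quotient.mk_surjective (maximalIdeal R)
    rw [htop, Ideal.comap_top, ← RingHom.ker_eq_comap_bot, Ideal.mk_ker, sup_eq_left.mpr] at this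
    · exact Ideal.IsPrime.ne_top' this.symm
    · rw [hm]; exact Ideal.span_mono (by simp)

lemma span_prime (hdim : ringKrullDim R = 2) {x y : R}
    (hm : maximalIdeal R = Ideal.span {x, y}) : (Ideal.span {y}).IsPrime := by
  rw [Ideal.isPrime_iff]
  constructor
  · intro h
    exact pow_notMem_span hdim hm 0 (by rw [h]; trivial)
  · intro a b hab
    by_contra! hcon
    obtain ⟨n, u, s, hu, h⟩ := exists_unit_form hm hcon.1
    obtain ⟨k, v, t, hv, h'⟩ := exists_unit_form hm hcon.2
    apply pow_notMem_span hdim hm (n + k)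
    rw [← Ideal.mul_unit_mem_iff_mem _ (hu.mul hv)]
    rw [Ideal.mem_span_singleton] at hab ⊢
    obtain ⟨c, hc⟩ := hab
    refine ⟨c - s * b - x ^ n * u * t, ?_⟩
    have : a * b = x ^ (n + k) * (u * v) + y * (s * b + x ^ n * u * t) := by
      conv_lhs => rw [h, add_mul]
      conv_lhs => enter [1]; rw [h']
      ring
    linear_combination hc - this

lemma isDomain_reg (hdim : ringKrullDim R = 2) {x y : R}
    (hm : maximalIdeal R = Ideal.span {x, y}) : IsDomain R := by
  have hpair : ∀ n : ℕ, maximalIdeal R = Ideal.span {y, x + y ^ (n + 1)} := by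
    intro n
    rw [hm]
    apply le_antisymm
    · rw [Ideal.span_le]
      rintro z (rfl | rfl)
      · exact Ideal.mem_span_pair.mpr ⟨- y ^ n, 1, by ring⟩
      · exact Ideal.subset_span (by simp)
    · rw [Ideal.span_le]
      rintro z (rfl | rfl)
      · exact Ideal.subset_span (by simp)
      · exact Ideal.mem_span_pair.mpr ⟨1, y ^ n, by ring⟩
  have hinj : Function.Injective (fun n : ℕ => Ideal.span {x + y ^ (n + 1)}) := by
    have hlt : ∀ n k : ℕ, n < k →
        Ideal.span {x + y ^ (n + 1)} ≠ Ideal.span {x + y ^ (k + 1)} := by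
      intro n k hnk h
      have hp := span_prime hdim (hpair n)
      have h1 : x + y ^ (k + 1) ∈ Ideal.span {x + y ^ (n + 1)} := by
        rw [h]; exact Ideal.mem_span_singleton_self _
      have h2 := Ideal.mem_span_singleton_self (x + y ^ (n + 1))
      have h3 := sub_mem h2 h1
      obtain ⟨d, rfl⟩ := Nat.exists_eq_add_of_lt hnk
      have h4 : y ^ (n + 1) * (1 - y ^ (d + 1)) ∈ Ideal.span {x + y ^ (n + 1)} := by
        convert h3 using 1; ring
      have hy : y ∈ maximalIdeal R := by rw [hm]; exact Ideal.subset_span (by simp)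
      have hu : IsUnit (1 - y ^ (d + 1)) := by
        by_contra hu
        have := add_mem ((mem_maximalIdeal _).mpr hu)
          (Ideal.pow_mem_of_mem _ hy (d + 1) (Nat.succ_pos _))
        rw [sub_add_cancel] at this
        exact (Ideal.ne_top_iff_one _).mp (Ideal.IsPrime.ne_top' (I := maximalIdeal R)) this
      rw [Ideal.mul_unit_mem_iff_mem _ hu] at h4
      exact pow_notMem_span hdim (hpair n) _ h4
    intro n k h
    rcases lt_trichotomy n k with hnk | hnk | hnk
    · exact absurd h (hlt _ _ hnk)
    · exact hnk
    · exact absurd h.symm (hlt _ _ hnk)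
  have hfin : (minimalPrimes R).Finite := minimalPrimes.finite_of_isNoetherianRing R
  obtain ⟨n, hn⟩ : ∃ n : ℕ, Ideal.span {x + y ^ (n + 1)} ∉ minimalPrimes R := by
    by_contra! hcon
    exact Set.infinite_of_injective_forall_mem hinj hcon hfin
  set z := x + y ^ (n + 1) with hz
  have hp : (Ideal.span {z}).IsPrime := span_prime hdim (hpair n)
  obtain ⟨Q, hQ, hQz⟩ := Ideal.exists_minimalPrimes_le (I := ⊥) (J := Ideal.span {z}) bot_le
  have hQp : Q.IsPrime := hQ.1.1
  have hzQ : z ∉ Q := by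
    intro h
    apply hn
    have : Ideal.span {z} = Q :=
      le_antisymm (by rwa [Ideal.span_singleton_le_iff_mem]) hQz
    rw [this]; exact hQ
  have hbot : Q = ⊥ := by
    apply Submodule.eq_bot_of_le_smul_of_le_jacobson_bot (maximalIdeal R) Q
      (IsNoetherian.noetherian Q)
    · intro q hq
      obtain ⟨r, rfl⟩ := Ideal.mem_span_singleton.mp (hQz hq)
      have hr : r ∈ Q := (hQp.mem_or_mem hq).resolve_left hzQ
      apply Submodule.smul_mem_smul _ hr
      rw [hpair n]; exact Ideal.subset_span (by simp [hz])
    · exact IsLocalRing.maximalIdeal_le_jacobson _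
  rw [hbot] at hQp
  have : NoZeroDivisors R := ⟨fun {a b} h => by
    simpa using hQp.mem_or_mem (x := a) (y := b) (by simpa using h)⟩
  exact NoZeroDivisors.to_isDomain R

lemma koszul (hdim : ringKrullDim R = 2) {x y : R}
    (hm : maximalIdeal R = Ideal.span {x, y}) {a b : R} (h : x * a + y * b = 0) :
    ∃ e, a = y * e ∧ b = - (x * e) := by
  have := isDomain_reg hdim hm
  have hp := span_prime hdim hm
  have h1 : x * a ∈ Ideal.span {y} :=
    Ideal.mem_span_singleton.mpr ⟨-b, by linear_combination h⟩
  have hx := pow_notMem_span hdim hm 1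
  rw [pow_one] at hx
  obtain ⟨e, rfl⟩ := Ideal.mem_span_singleton.mp ((hp.mem_or_mem h1).resolve_left hx)
  refine ⟨e, rfl, ?_⟩
  have hy : y ≠ 0 := by
    rintro rfl
    have hm' : maximalIdeal R = Ideal.span {0, x} := by rw [hm, Set.pair_comm]
    exact pow_notMem_span hdim hm' 1 (by simp)
  have : y * (x * e + b) = 0 := by linear_combination h
  have := (mul_eq_zero.mp this).resolve_left hy
  linear_combination this

lemma mem_pair_mul {x y : R} (hm : maximalIdeal R = Ideal.span {x, y}) (J : Ideal R) {w : R}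
    (hw : w ∈ maximalIdeal R * J) : ∃ c ∈ J, ∃ d ∈ J, w = x * c + y * d := by
  rw [hm, Ideal.span_insert, Ideal.sup_mul, Submodule.mem_sup] at hw
  obtain ⟨p, hp, q, hq, rfl⟩ := hw
  obtain ⟨c, hc, rfl⟩ := Ideal.mem_span_singleton_mul.mp hp
  obtain ⟨d, hd, rfl⟩ := Ideal.mem_span_singleton_mul.mp hq
  exact ⟨c, hc, d, hd, rfl⟩

/-- multiplication by an element of the maximal ideal, on cotangent-type quotients -/
noncomputable def mulQ (I : Ideal R) (x : R) (hx : x ∈ maximalIdeal R) :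
    (I ⧸ (maximalIdeal R) • (⊤ : Submodule R I)) →ₗ[R]
      ((maximalIdeal R * I : Ideal R) ⧸
        (maximalIdeal R) • (⊤ : Submodule R (maximalIdeal R * I : Ideal R))) :=
  Submodule.mapQ _ _
    (((LinearMap.mulLeft R x).comp (Submodule.subtype I)).codRestrict (maximalIdeal R * I)
      (fun a => Ideal.mul_mem_mul hx a.2)) (by
    intro a ha
    rw [Submodule.mem_comap, Submodule.mem_smul_top_iff]
    rw [Submodule.mem_smul_top_iff] at ha
    exact Ideal.mul_mem_mul hx ha)

lemma finrank_lt_iff_not_injective {k V W : Type*} [Field k] [AddCommGroup V] [AddCommGroup W]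
    [Module k V] [Module k W] [FiniteDimensional k V] (f : V →ₗ[k] W)
    (hf : Function.Surjective f) :
    Module.finrank k W < Module.finrank k V ↔ ¬ Function.Injective f := by
  have h := f.finrank_range_add_finrank_ker
  rw [LinearMap.range_eq_top.mpr hf, finrank_top] at h
  rw [← LinearMap.ker_eq_bot, ← Submodule.finrank_eq_zero (R := k)]
  omega

lemma mu_lt_iff {x y : R} (hm : maximalIdeal R = Ideal.span {x, y}) (I : Ideal R) :
    muGen (maximalIdeal R * I) < 2 * muGen I ↔
      ¬ ∀ a ∈ I, ∀ b ∈ I, x * a + y * b ∈ maximalIdeal R * (maximalIdeal R * I) →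
        a ∈ maximalIdeal R * I ∧ b ∈ maximalIdeal R * I := by
  have hx : x ∈ maximalIdeal R := by rw [hm]; exact Ideal.subset_span (by simp)
  have hy : y ∈ maximalIdeal R := by rw [hm]; exact Ideal.subset_span (by simp)
  rw [muGen_eq_spanFinrank, muGen_eq_spanFinrank,
    spanFinrank_eq_finrank_quotient _ (IsNoetherian.noetherian _),
    spanFinrank_eq_finrank_quotient _ (IsNoetherian.noetherian _)]
  let : Field (R ⧸ maximalIdeal R) := Ideal.Quotient.field _
  let f := (mulQ I x hx).coprod (mulQ I y hy)
  let g := f.extendScalarsOfSurjective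
    (Ideal.Quotient.mk_surjective (I := maximalIdeal R))
  have hfin : Module.Finite (R ⧸ maximalIdeal R)
      (I ⧸ (maximalIdeal R) • (⊤ : Submodule R I)) :=
    Module.Finite.of_restrictScalars_finite R _ _
  have hval : ∀ a b : I, g (Submodule.mkQ _ a, Submodule.mkQ _ b) =
      Submodule.mkQ (maximalIdeal R • (⊤ : Submodule R (maximalIdeal R * I : Ideal R)))
        (⟨x * a + y * b, add_mem (Ideal.mul_mem_mul hx a.2) (Ideal.mul_mem_mul hy b.2)⟩ :
          (maximalIdeal R * I : Ideal R)) := fun a b => rfl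
  have hg : Function.Surjective g := by
    intro w
    obtain ⟨w, rfl⟩ := Submodule.mkQ_surjective _ w
    obtain ⟨c, hc, d, hd, h⟩ := mem_pair_mul hm I w.2
    refine ⟨(Submodule.mkQ _ ⟨c, hc⟩, Submodule.mkQ _ ⟨d, hd⟩), ?_⟩
    rw [hval]
    congr 1
    exact Subtype.ext h.symm
  have hgl := finrank_lt_iff_not_injective g hg
  rw [Module.finrank_prod, ← two_mul] at hgl
  have key : Function.Injective g ↔ ∀ a ∈ I, ∀ b ∈ I,
      x * a + y * b ∈ maximalIdeal R * (maximalIdeal R * I) →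
        a ∈ maximalIdeal R * I ∧ b ∈ maximalIdeal R * I := by
    have hz : ∀ a b : I, g (Submodule.mkQ _ a, Submodule.mkQ _ b) = 0 ↔
        x * a + y * b ∈ maximalIdeal R * (maximalIdeal R * I) := by
      intro a b
      rw [hval, Submodule.mkQ_apply, Submodule.Quotient.mk_eq_zero,
        Submodule.mem_smul_top_iff]
      rfl
    have hz' : ∀ a : I, Submodule.mkQ (maximalIdeal R • (⊤ : Submodule R I)) a = 0 ↔
        (a : R) ∈ maximalIdeal R * I := by
      intro a
      rw [Submodule.mkQ_apply, Submodule.Quotient.mk_eq_zero, Submodule.mem_smul_top_iff]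
      rfl
    rw [injective_iff_map_eq_zero]
    constructor
    · intro h a ha b hb hab
      have := h _ ((hz ⟨a, ha⟩ ⟨b, hb⟩).mpr hab)
      rw [Prod.mk_eq_zero, hz', hz'] at this
      exact this
    · rintro h ⟨a, b⟩ hab
      obtain ⟨a, rfl⟩ := Submodule.mkQ_surjective _ a
      obtain ⟨b, rfl⟩ := Submodule.mkQ_surjective _ b
      rw [Prod.mk_eq_zero, hz', hz']
      exact h a a.2 b b.2 ((hz a b).mp hab)
  rw [← key]
  exact hgl

end reg

/-- Lemma 6.1: let `(R, m)` be a two-dimensional regular local ring and `I` an `m`-primary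
ideal. Then `I` is a Burch ideal if and only if `μ(mI) < 2 μ(I)`. -/
theorem burch_iff_mu_lt {R : Type*} [CommRing R] [IsNoetherianRing R] [IsLocalRing R]
    (hdim : ringKrullDim R = 2)
    (hreg : ∃ x y : R, maximalIdeal R = Ideal.span {x, y})
    (I : Ideal R) (hprim : I.radical = maximalIdeal R) :
    (maximalIdeal R * I ≠ maximalIdeal R * Submodule.colon I (maximalIdeal R)) ↔
      muGen (maximalIdeal R * I) < 2 * muGen I := by
  obtain ⟨x, y, hm⟩ := hreg
  have hx : x ∈ maximalIdeal R := by rw [hm]; exact Ideal.subset_span (by simp)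
  have hy : y ∈ maximalIdeal R := by rw [hm]; exact Ideal.subset_span (by simp)
  rw [mu_lt_iff hm, ne_eq, not_iff_not]
  constructor
  · intro heq a ha b hb hab
    obtain ⟨c, hc, d, hd, h⟩ := mem_pair_mul hm _ hab
    obtain ⟨e, h1, h2⟩ := koszul hdim hm (a := a - c) (b := b - d) (by linear_combination h)
    have hcI : c ∈ I := Ideal.mul_le_right (I := maximalIdeal R) (J := I) hc
    have hdI : d ∈ I := Ideal.mul_le_right (I := maximalIdeal R) (J := I) hd
    have he : e ∈ Submodule.colon I (maximalIdeal R : Set R) := by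
      rw [Submodule.mem_colon]
      intro s hs
      rw [SetLike.mem_coe, hm, Ideal.mem_span_pair] at hs
      obtain ⟨p, q, rfl⟩ := hs
      have h3 : y * e ∈ I := h1 ▸ sub_mem ha hcI
      have h4 : x * e ∈ I := by
        have := neg_mem (sub_mem hb hdI)
        rwa [h2, neg_neg] at this
      have h5 := add_mem (Ideal.mul_mem_left I p h4) (Ideal.mul_mem_left I q h3)
      rw [smul_eq_mul]
      convert h5 using 1; ring
    have hye : y * e ∈ maximalIdeal R * I := by rw [heq]; exact Ideal.mul_mem_mul hy he
    have hxe : x * e ∈ maximalIdeal R * I := by rw [heq]; exact Ideal.mul_mem_mul hx he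
    constructor
    · have := add_mem hye hc
      rwa [← h1, sub_add_cancel] at this
    · have := add_mem (neg_mem hxe) hd
      rwa [← h2, sub_add_cancel] at this
  · intro h
    apply le_antisymm
    · refine Ideal.mul_mono_right ?_
      intro i hi
      rw [Submodule.mem_colon]
      intro s _
      exact Ideal.mul_mem_right _ _ hi
    · intro w hw
      obtain ⟨c, hc, d, hd, rfl⟩ := mem_pair_mul hm _ hw
      have aux : ∀ e ∈ Submodule.colon I (maximalIdeal R : Set R),
          y * e ∈ maximalIdeal R * I ∧ -(x * e) ∈ maximalIdeal R * I := by
        intro e he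
        rw [Submodule.mem_colon] at he
        refine h _ ?_ _ ?_ ?_
        · rw [mul_comm]; exact he y hy
        · rw [mul_comm]; exact neg_mem (he x hx)
        · convert Submodule.zero_mem _ using 1; ring
      exact add_mem (by simpa using neg_mem (aux c hc).2) (aux d hd).1
end

section
/- Let (R, m) be a regular local ring of dimension d, x_1, …, x_d a regular system of parameters, and I a monomial ideal (in the x_i's). Then I is a Burch ideal if and only if there exist a monomial m' ∈ (I : m) and an index 1 ≤ i ≤ d such that x_i m' ∉ mI. -/
open IsLocalRing

namespace BurchAux

variable {R : Type*} [CommRing R] {d : ℕ}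

/-- The monomial with exponent vector `e`. -/
def mon (x : Fin d → R) (e : Fin d → ℕ) : R := ∏ i, x i ^ e i

/-- The weight of an exponent vector. -/
def wt (w : Fin d → ℕ) (e : Fin d → ℕ) : ℕ := ∑ i, w i * e i

/-- The ideal spanned by monomials with exponents in `S` of weight at least `n`. -/
def F (x : Fin d → R) (w : Fin d → ℕ) (S : Set (Fin d → ℕ)) (n : ℕ) : Ideal R :=
  Ideal.span (mon x '' {e | e ∈ S ∧ n ≤ wt w e})

lemma mon_add (x : Fin d → R) (e f : Fin d → ℕ) : mon x (e + f) = mon x e * mon x f := by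
  simp [mon, pow_add, Finset.prod_mul_distrib]

lemma wt_add (w : Fin d → ℕ) (e f : Fin d → ℕ) : wt w (e + f) = wt w e + wt w f := by
  simp [wt, mul_add, Finset.sum_add_distrib]

lemma mon_single (x : Fin d → R) (i : Fin d) : mon x (Pi.single i 1) = x i := by
  unfold mon
  rw [Finset.prod_eq_single i]
  · simp
  · intro j _ hj
    simp [Pi.single_eq_of_ne hj]
  · simp

lemma wt_single (w : Fin d → ℕ) (i : Fin d) : wt w (Pi.single i 1) = w i := by
  unfold wt
  rw [Finset.sum_eq_single i]
  · simp
  · intro j _ hj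
    simp [Pi.single_eq_of_ne hj]
  · simp

lemma mon_mem_F {x : Fin d → R} {w : Fin d → ℕ} {S : Set (Fin d → ℕ)} {n : ℕ} {e : Fin d → ℕ}
    (h : e ∈ S) (hn : n ≤ wt w e) : mon x e ∈ F x w S n :=
  Ideal.subset_span ⟨e, ⟨h, hn⟩, rfl⟩

lemma F_mono {x : Fin d → R} {w : Fin d → ℕ} {S T : Set (Fin d → ℕ)} {n m : ℕ}
    (hS : S ⊆ T) (h : n ≤ m) : F x w S m ≤ F x w T n :=
  Ideal.span_mono (Set.image_mono fun _ he => ⟨hS he.1, h.trans he.2⟩)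

lemma F_mul {x : Fin d → R} {w : Fin d → ℕ} {n m : ℕ} :
    F x w Set.univ n * F x w Set.univ m ≤ F x w Set.univ (n + m) := by
  unfold F
  rw [Ideal.span_mul_span', Ideal.span_le]
  rintro _ ⟨_, ⟨e, he, rfl⟩, _, ⟨f, hf, rfl⟩, rfl⟩
  refine Ideal.subset_span ⟨e + f, ⟨trivial, ?_⟩, mon_add _ _ _⟩
  rw [wt_add]
  exact add_le_add he.2 hf.2

lemma F_pow {x : Fin d → R} {w : Fin d → ℕ} {n : ℕ} {r : R} (h : r ∈ F x w Set.univ n) (t : ℕ) :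
    r ^ t ∈ F x w Set.univ (n * t) := by
  induction t with
  | zero =>
    have : (1 : R) = mon x 0 := by simp [mon]
    rw [pow_zero, this]
    exact mon_mem_F trivial (by simp)
  | succ t ih =>
    rw [pow_succ, mul_add, mul_one]
    exact F_mul (Ideal.mul_mem_mul ih h)

/-- A monomial is not in the ideal of monomials of larger weight. -/
lemma not_mem [IsNoetherianRing R] [IsLocalRing R] {x : Fin d → R}
    (hx : Ideal.span (Set.range x) = maximalIdeal R)
    (hdim : ringKrullDim R = (d : ℕ)) (i0 : Fin d) (w : Fin d → ℕ) (hw : ∀ i, 0 < w i)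
    (e : Fin d → ℕ) : mon x e ∉ F x w Set.univ (wt w e + 1) := by
  classical
  intro he
  have hxm : ∀ i, x i ∈ maximalIdeal R := fun i => hx ▸ Ideal.subset_span ⟨i, rfl⟩
  set L := ∏ i, w i with hL
  have hLpos : 0 < L := Finset.prod_pos fun i _ => hw i
  have hex : ∀ i, ∃ a, L = w i * a := fun i => Finset.dvd_prod_of_mem w (Finset.mem_univ i)
  choose a ha using hex
  have hapos : ∀ i, 0 < a i := fun i => Nat.pos_of_ne_zero fun h => by
    have := ha i
    rw [h] at this
    omega
  set s : Finset R := (Finset.univ.erase i0).image (fun i => x i ^ a i - x i0 ^ a i0) with hs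
  have hcard : s.card < d := by
    refine lt_of_le_of_lt Finset.card_image_le ?_
    rw [Finset.card_erase_of_mem (Finset.mem_univ _), Finset.card_univ, Fintype.card_fin]
    have := i0.pos
    omega
  have key : maximalIdeal R ∈ (Ideal.span (s : Set R)).minimalPrimes := by
    refine ⟨⟨inferInstance, ?_⟩, ?_⟩
    · rw [Ideal.span_le]
      intro r hr
      simp only [hs, Finset.coe_image, Set.mem_image] at hr
      obtain ⟨i, -, rfl⟩ := hr
      exact sub_mem (Ideal.pow_mem_of_mem _ (hxm i) _ (hapos i))
        (Ideal.pow_mem_of_mem _ (hxm i0) _ (hapos i0))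
    · rintro p ⟨hp, hsp⟩ -
      have hpm : p ≤ maximalIdeal R := le_maximalIdeal hp.ne_top
      set φ := Ideal.Quotient.mk p with hφ
      set y : R ⧸ p := φ (x i0 ^ a i0) with hy
      have hyi : ∀ i, φ (x i) ^ a i = y := by
        intro i
        by_cases hi : i = i0
        · rw [hi, hy, map_pow]
        · rw [← map_pow, hy, hφ, Ideal.Quotient.eq]
          apply hsp
          apply Ideal.subset_span
          simp only [hs, Finset.coe_image, Set.mem_image]
          exact ⟨i, by simp [hi], rfl⟩
      -- high weight implies divisible by a high power of `y`
      have hdivis : ∀ q k, L * q + d * L ≤ k → ∀ r ∈ F x w Set.univ k,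
          φ r ∈ Ideal.span {y ^ q} := by
        intro q k hk r hr
        have hle : F x w Set.univ k ≤ (Ideal.span {y ^ q}).comap φ := by
          unfold F
          rw [Ideal.span_le]
          rintro _ ⟨f, ⟨-, hf⟩, rfl⟩
          simp only [SetLike.mem_coe, Ideal.mem_comap]
          rw [Ideal.mem_span_singleton]
          have h1 : φ (mon x f) = y ^ (∑ i, f i / a i) * ∏ i, φ (x i) ^ (f i % a i) := by
            rw [← Finset.prod_pow_eq_pow_sum, ← Finset.prod_mul_distrib]
            unfold mon
            rw [map_prod]
            refine Finset.prod_congr rfl fun i _ => ?_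
            rw [← hyi i, ← pow_mul, ← pow_add, Nat.div_add_mod, map_pow]
          rw [h1]
          refine Dvd.dvd.mul_right (pow_dvd_pow _ ?_) _
          have h2 : wt w f ≤ L * (∑ i, f i / a i) + d * L := by
            have : d * L = ∑ _i : Fin d, L := by simp
            rw [this, Finset.mul_sum, ← Finset.sum_add_distrib]
            refine Finset.sum_le_sum fun i _ => ?_
            conv_rhs => rw [ha i]
            rw [mul_assoc, ← mul_add]
            refine Nat.mul_le_mul_left _ ?_
            conv_lhs => rw [← Nat.div_add_mod (f i) (a i)]
            have := Nat.mod_lt (f i) (hapos i)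
            omega
          have h3 : L * q ≤ L * (∑ i, f i / a i) := by omega
          exact Nat.le_of_mul_le_mul_left h3 hLpos
        exact hle hr
      set M := ∑ i, e i with hM
      have hMe : ∀ i, e i ≤ a i * M := fun i =>
        (Finset.single_le_sum (f := e) (fun _ _ => Nat.zero_le _) (Finset.mem_univ i)).trans
          (Nat.le_mul_of_pos_left _ (hapos i))
      set E : Fin d → ℕ := fun i => a i * M with hE
      have hEsub : E = (fun i => E i - e i) + e := by
        ext i
        have := hMe i
        simp only [hE, Pi.add_apply]
        omega
      have hEF : mon x E ∈ F x w Set.univ (wt w E + 1) := by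
        rw [hEsub, mon_add, wt_add, add_assoc]
        exact F_mul (Ideal.mul_mem_mul (mon_mem_F trivial le_rfl) he)
      have hwE : wt w E = L * (d * M) := by
        unfold wt
        have : ∀ i, w i * E i = L * M := fun i => by
          simp only [hE]
          rw [← mul_assoc, ← ha i]
        simp only [this]
        simp
        ring
      have hmE : φ (mon x E) = y ^ (d * M) := by
        unfold mon
        rw [map_prod]
        have : ∀ i, φ (x i ^ E i) = y ^ M := fun i => by
          simp only [hE]
          rw [map_pow, pow_mul, hyi]
        simp only [this]
        simp [← pow_mul, mul_comm]
      have hfin := hdivis (d * M * ((d + 1) * L) + 1) _ (by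
        rw [hwE]
        apply le_of_eq
        ring) _ (F_pow hEF ((d + 1) * L))
      rw [map_pow, hmE, ← pow_mul, Ideal.mem_span_singleton] at hfin
      obtain ⟨c, hc⟩ := hfin
      obtain ⟨c, rfl⟩ := Ideal.Quotient.mk_surjective c
      have hz : y ^ (d * M * ((d + 1) * L)) * (1 - y * φ c) = 0 := by
        rw [pow_succ] at hc
        rw [mul_sub, mul_one, sub_eq_zero]
        exact hc.trans (mul_assoc _ _ _)
      have hy0 : y = 0 := by
        rcases mul_eq_zero.mp hz with h | h
        · exact eq_zero_of_pow_eq_zero h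
        · exfalso
          rw [hy, ← map_mul, ← map_one φ, ← map_sub, hφ, Ideal.Quotient.eq_zero_iff_mem] at h
          have h1 := hpm h
          have h2 : x i0 ^ a i0 * c ∈ maximalIdeal R :=
            Ideal.mul_mem_right _ _ (Ideal.pow_mem_of_mem _ (hxm i0) _ (hapos i0))
          have h3 := add_mem h1 h2
          rw [sub_add_cancel] at h3
          exact (Ideal.ne_top_iff_one _).mp (maximalIdeal.isMaximal R).ne_top h3
      rw [← hx, Ideal.span_le]
      rintro _ ⟨i, rfl⟩
      have := hyi i
      rw [hy0] at this
      exact Ideal.Quotient.eq_zero_iff_mem.mp (eq_zero_of_pow_eq_zero this)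
  have h1 := Ideal.height_le_card_of_mem_minimalPrimes_span_finset key
  have h2 := IsLocalRing.maximalIdeal_height_eq_ringKrullDim (R := R)
  rw [hdim] at h2
  have h3 : (maximalIdeal R).height = (d : ℕ∞) := by exact_mod_cast h2
  rw [h3] at h1
  have : d ≤ s.card := by exact_mod_cast h1
  omega

/-- Multiplying by the maximal ideal raises the weight. -/
lemma push [IsLocalRing R] {x : Fin d → R}
    (hx : Ideal.span (Set.range x) = maximalIdeal R) {w : Fin d → ℕ} (hw : ∀ i, 0 < w i)
    {S : Set (Fin d → ℕ)} (hS : ∀ e ∈ S, ∀ i, Pi.single i 1 + e ∈ S)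
    {e : Fin d → ℕ} (he : e ∈ S) {c : R} (hc : c ∈ maximalIdeal R) :
    c * mon x e ∈ F x w S (wt w e + 1) := by
  rw [← hx] at hc
  induction hc using Submodule.span_induction with
  | mem c h =>
    obtain ⟨i, rfl⟩ := h
    rw [← mon_single x i, ← mon_add]
    refine mon_mem_F (hS e he i) ?_
    rw [wt_add, wt_single]
    have := hw i
    omega
  | zero => simp
  | add a b _ _ ha hb =>
    rw [add_mul]
    exact add_mem ha hb
  | smul r a _ ha =>
    rw [smul_eq_mul, mul_assoc]
    exact Ideal.mul_mem_left _ _ ha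

lemma step [IsLocalRing R] {x : Fin d → R}
    (hx : Ideal.span (Set.range x) = maximalIdeal R) {w : Fin d → ℕ} (hw : ∀ i, 0 < w i)
    {S : Set (Fin d → ℕ)} (hS : ∀ e ∈ S, ∀ i, Pi.single i 1 + e ∈ S) {n : ℕ}
    (hinj : ∀ e f, wt w e = n → wt w f = n → e = f) {g : R} (hg : g ∈ F x w S n) :
    g ∈ F x w S (n + 1) ∨
      ∃ e ∈ S, wt w e = n ∧ ∃ c, IsUnit c ∧ g - c * mon x e ∈ F x w S (n + 1) := by
  by_cases h : ∃ e ∈ S, wt w e = n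
  · obtain ⟨e, heS, hen⟩ := h
    have hle : F x w S n ≤ Ideal.span {mon x e} ⊔ F x w S (n + 1) := by
      conv_lhs => unfold F
      rw [Ideal.span_le]
      rintro _ ⟨f, ⟨hfS, hfn⟩, rfl⟩
      rcases hfn.eq_or_lt with h | h
      · rw [hinj f e h.symm hen]
        exact Ideal.mem_sup_left (Ideal.mem_span_singleton_self _)
      · exact Ideal.mem_sup_right (mon_mem_F hfS h)
    obtain ⟨u, hu, v, hv, rfl⟩ := Submodule.mem_sup.mp (hle hg)
    obtain ⟨c, rfl⟩ := Ideal.mem_span_singleton'.mp hu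
    by_cases hc : IsUnit c
    · right
      exact ⟨e, heS, hen, c, hc, by simpa using hv⟩
    · left
      refine add_mem ?_ hv
      rw [← hen]
      exact push hx hw hS heS ((mem_maximalIdeal c).mpr hc)
  · left
    push Not at h
    have hle : F x w S n ≤ F x w S (n + 1) := by
      conv_lhs => unfold F
      rw [Ideal.span_le]
      rintro _ ⟨f, ⟨hfS, hfn⟩, rfl⟩
      have := h f hfS
      exact mon_mem_F hfS (by omega)
    exact hle hg

/-- The leading monomial of an element of a monomial ideal lies in the ideal. -/
lemma lead [IsNoetherianRing R] [IsLocalRing R] {x : Fin d → R}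
    (hx : Ideal.span (Set.range x) = maximalIdeal R)
    (hdim : ringKrullDim R = (d : ℕ)) (i0 : Fin d) {w : Fin d → ℕ} (hw : ∀ i, 0 < w i)
    {S : Set (Fin d → ℕ)} (hS : ∀ e ∈ S, ∀ i, Pi.single i 1 + e ∈ S) {n0 : ℕ}
    (hinj : ∀ e f, wt w e < n0 → wt w e = wt w f → e = f) {g : R} (hg : g ∈ F x w S 0)
    {h : Fin d → ℕ} (hh : wt w h < n0) {c : R} (hc : IsUnit c)
    (hgh : g - c * mon x h ∈ F x w Set.univ (wt w h + 1)) : h ∈ S := by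
  by_contra hhS
  have hgW : g ∈ F x w Set.univ (wt w h) := by
    have h1 := F_mono (x := x) (w := w) (Set.Subset.refl Set.univ) (Nat.le_succ (wt w h)) hgh
    have h2 : c * mon x h ∈ F x w Set.univ (wt w h) :=
      Ideal.mul_mem_left _ _ (mon_mem_F trivial le_rfl)
    simpa using add_mem h1 h2
  have claim : ∀ k, k ≤ wt w h + 1 → g ∈ F x w S k := by
    intro k
    induction k with
    | zero => intro _; exact hg
    | succ k ih =>
      intro hk
      rcases step hx hw hS (n := k) (fun e f he hf => hinj e f (by omega) (by omega))
        (ih (by omega)) with h1 | ⟨e, heS, hek, b, hb, h1⟩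
      · exact h1
      · exfalso
        rcases (Nat.lt_succ_iff.mp hk).eq_or_lt with h2 | h2
        · exact hhS (hinj e h (by omega) (by omega) ▸ heS)
        · refine not_mem hx hdim i0 w hw e ?_
          rw [← Ideal.unit_mul_mem_iff_mem _ hb]
          have h3 := F_mono (x := x) (w := w) (Set.subset_univ S) le_rfl h1
          have h4 : g ∈ F x w Set.univ (k + 1) := F_mono (Set.Subset.refl _) h2 hgW
          rw [hek]
          simpa using sub_mem h4 h3
  have h1 := F_mono (x := x) (w := w) (Set.subset_univ S) le_rfl (claim _ le_rfl)
  refine not_mem hx hdim i0 w hw h ?_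
  rw [← Ideal.unit_mul_mem_iff_mem _ hc]
  simpa using sub_mem h1 hgh

/-- Existence of weights separating monomials of low weight. -/
lemma exists_wt (d N : ℕ) : ∃ (w : Fin d → ℕ) (n0 n1 : ℕ), (∀ i, 0 < w i) ∧
    (∀ e f, wt w e < n0 → wt w e = wt w f → e = f) ∧
    (∀ i, n1 + w i ≤ n0) ∧ (∀ e, n1 ≤ wt w e → N ≤ ∑ i, e i) := by
  set B := 2 * N + 2 with hB
  set C := B ^ (d + 1) with hC
  have hBpos : 0 < B := by omega
  have hpow : ∀ i : Fin d, B ^ (i : ℕ) ≤ B ^ d := fun i => Nat.pow_le_pow_right hBpos i.2.le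
  have hCB : C = B ^ d * B := pow_succ _ _
  have hdC : B ^ d ≤ C := by rw [hCB]; exact Nat.le_mul_of_pos_right _ hBpos
  have hCpos : 0 < C := Nat.pow_pos hBpos
  have hwt : ∀ e : Fin d → ℕ, wt (fun i => C + B ^ (i : ℕ)) e =
      C * (∑ i, e i) + ∑ i, e i * B ^ (i : ℕ) := by
    intro e
    unfold wt
    rw [Finset.mul_sum, ← Finset.sum_add_distrib]
    refine Finset.sum_congr rfl fun i _ => by ring
  have hP : ∀ e : Fin d → ℕ, ∑ i, e i * B ^ (i : ℕ) ≤ (∑ i, e i) * B ^ d := by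
    intro e
    rw [Finset.sum_mul]
    exact Finset.sum_le_sum fun i _ => Nat.mul_le_mul_left _ (hpow i)
  refine ⟨fun i => C + B ^ (i : ℕ), C * B, C * (2 * N), fun i => by positivity, ?_, ?_, ?_⟩
  · have hlow : ∀ e : Fin d → ℕ, wt (fun i => C + B ^ (i : ℕ)) e < C * B →
        (∑ i, e i) < B ∧ ∑ i, e i * B ^ (i : ℕ) < C := by
      intro e he
      rw [hwt] at he
      have h1 : (∑ i, e i) < B := by
        by_contra hcon
        have := Nat.mul_le_mul_left C (not_lt.mp hcon)
        omega
      refine ⟨h1, lt_of_le_of_lt (hP e) ?_⟩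
      rw [hCB, mul_comm]
      exact Nat.mul_lt_mul_of_pos_left h1 (Nat.pow_pos hBpos)
    intro e f he hef
    obtain ⟨he1, he2⟩ := hlow e he
    obtain ⟨hf1, hf2⟩ := hlow f (hef ▸ he)
    rw [hwt, hwt] at hef
    have hmod := congrArg (· % C) hef
    simp only [Nat.mul_add_mod, Nat.mod_eq_of_lt he2, Nat.mod_eq_of_lt hf2] at hmod
    have hlt : ∀ g : Fin d → ℕ, (∑ i, g i) < B → ∀ i, g i < B := fun g hg i =>
      lt_of_le_of_lt
        (Finset.single_le_sum (f := g) (fun _ _ => Nat.zero_le _) (Finset.mem_univ i)) hg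
    have := finFunctionFinEquiv.injective (a₁ := fun i => (⟨e i, hlt e he1 i⟩ : Fin B))
      (a₂ := fun i => (⟨f i, hlt f hf1 i⟩ : Fin B)) (by
        apply Fin.ext
        rw [finFunctionFinEquiv_apply, finFunctionFinEquiv_apply]
        exact hmod)
    ext i
    exact congrArg Fin.val (congrFun this i)
  · intro i
    have := hpow i
    have h2 : C * B = C * (2 * N) + C * 2 := by rw [hB]; ring
    simp only
    omega
  · intro e he
    rw [hwt] at he
    have h1 := hP e
    have h2 : (∑ i, e i) * B ^ d ≤ (∑ i, e i) * C := Nat.mul_le_mul_left _ hdC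
    have h3 : C * (2 * N) ≤ C * (2 * ∑ i, e i) := by
      calc _ ≤ _ := he
        _ ≤ C * (∑ i, e i) + (∑ i, e i) * C := by omega
        _ = _ := by ring
    have := Nat.le_of_mul_le_mul_left h3 hCpos
    omega

lemma mon_mem_pow {x : Fin d → R} {m : Ideal R} (hx : ∀ i, x i ∈ m) (e : Fin d → ℕ) :
    mon x e ∈ m ^ (∑ i, e i) := by
  unfold mon
  rw [← Finset.prod_pow_eq_pow_sum]
  exact Ideal.prod_mem_prod fun i _ => Ideal.pow_mem_pow (hx i) _

lemma krull [IsNoetherianRing R] [IsLocalRing R] {J : Ideal R} {f : R}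
    (h : ∀ n : ℕ, f ∈ J ⊔ maximalIdeal R ^ n) : f ∈ J := by
  have h0 := Ideal.iInf_pow_smul_eq_bot_of_isLocalRing (M := R ⧸ J) (maximalIdeal R)
    (maximalIdeal.isMaximal R).ne_top
  have h1 : (Ideal.Quotient.mk J f) ∈ (⨅ i : ℕ, maximalIdeal R ^ i • ⊤ : Submodule R (R ⧸ J)) := by
    rw [Submodule.mem_iInf]
    intro n
    obtain ⟨u, hu, v, hv, rfl⟩ := Submodule.mem_sup.mp (h n)
    rw [map_add, Ideal.Quotient.eq_zero_iff_mem.mpr hu, zero_add]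
    have : Ideal.Quotient.mk J v = v • (1 : R ⧸ J) := by
      rw [Algebra.smul_def, mul_one]; rfl
    rw [this]
    exact Submodule.smul_mem_smul hv trivial
  rw [h0, Submodule.mem_bot] at h1
  exact Ideal.Quotient.eq_zero_iff_mem.mp h1

lemma mem_colon_iff [IsLocalRing R] {x : Fin d → R}
    (hx : Ideal.span (Set.range x) = maximalIdeal R) {I : Ideal R} {f : R} :
    f ∈ Submodule.colon I (maximalIdeal R : Set R) ↔ ∀ i, x i * f ∈ I := by
  rw [Submodule.mem_colon]
  constructor
  · intro h i
    rw [mul_comm]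
    exact h _ (hx ▸ Ideal.subset_span ⟨i, rfl⟩)
  · intro h s hs
    rw [← hx] at hs
    have hle : Ideal.span (Set.range x) ≤ Submodule.comap (LinearMap.mulLeft R f) I := by
      rw [Ideal.span_le]
      rintro _ ⟨i, rfl⟩
      simpa [mul_comm] using h i
    exact hle hs

/-- The colon ideal is spanned by monomials. -/
lemma colon_le [IsNoetherianRing R] [IsLocalRing R] {x : Fin d → R}
    (hx : Ideal.span (Set.range x) = maximalIdeal R)
    (hdim : ringKrullDim R = (d : ℕ)) {I : Ideal R}
    (hmono : ∃ E : Set (Fin d → ℕ), I = Ideal.span (mon x '' E)) :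
    Submodule.colon I (maximalIdeal R : Set R) ≤
      Ideal.span (mon x '' {e | mon x e ∈ Submodule.colon I (maximalIdeal R : Set R)}) := by
  intro f hf
  set J := Ideal.span (mon x '' {e | mon x e ∈ Submodule.colon I (maximalIdeal R : Set R)}) with hJ
  have hxm : ∀ i, x i ∈ maximalIdeal R := fun i => hx ▸ Ideal.subset_span ⟨i, rfl⟩
  apply krull
  intro N
  obtain ⟨w, n0, n1, hw, hinj, hn, hdeg⟩ := exists_wt d N
  set S : Set (Fin d → ℕ) := {e | mon x e ∈ I} with hSdef
  have hS : ∀ e ∈ S, ∀ i, Pi.single i 1 + e ∈ S := by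
    intro e he i
    simp only [hSdef, Set.mem_ofPred_eq, mon_add]
    exact Ideal.mul_mem_left _ _ he
  have hIS : I ≤ F x w S 0 := by
    obtain ⟨E, hE⟩ := hmono
    conv_lhs => rw [hE]
    refine Ideal.span_mono (Set.image_mono fun e he => ⟨?_, Nat.zero_le _⟩)
    simp only [hSdef, Set.mem_ofPred_eq]
    rw [hE]
    exact Ideal.subset_span ⟨e, he, rfl⟩
  have claim : ∀ n, n ≤ n1 → ∃ j ∈ J, f - j ∈ F x w Set.univ n ∧
      f - j ∈ Submodule.colon I (maximalIdeal R : Set R) := by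
    intro n
    induction n with
    | zero =>
      intro _
      refine ⟨0, zero_mem _, ?_, by simpa using hf⟩
      have h1 : (1 : R) = mon x 0 := by simp [mon]
      have : F x w Set.univ 0 = ⊤ := by
        rw [Ideal.eq_top_iff_one, h1]
        exact mon_mem_F trivial (Nat.zero_le _)
      rw [this]
      trivial
    | succ n ih =>
      intro hnn
      obtain ⟨j, hj, hjF, hjc⟩ := ih (by omega)
      by_cases hd : Nonempty (Fin d)
      · have hn10 : n1 ≤ n0 := (Nat.le_add_right _ _).trans (hn hd.some)
        rcases step hx hw (S := Set.univ) (fun _ _ _ => trivial) (n := n)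
          (fun e f he hf => hinj e f (by omega) (by omega)) hjF with h1 | ⟨e, -, hen, c, hc, h1⟩
        · exact ⟨j, hj, h1, hjc⟩
        · have hec : mon x e ∈ Submodule.colon I (maximalIdeal R : Set R) := by
            rw [mem_colon_iff hx]
            intro i
            have hi := (mem_colon_iff hx).mp hjc i
            rw [← mon_single x i, ← mon_add]
            have hni := hn i
            refine lead hx hdim i hw hS hinj (hIS hi) (h := Pi.single i 1 + e) (c := c) ?_ hc ?_
            · rw [wt_add, wt_single]
              omega
            · rw [mon_add, wt_add, mon_single, hen, add_assoc]
              have h2 := F_mul (Ideal.mul_mem_mul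
                (mon_mem_F (x := x) (w := w) (S := Set.univ) (e := Pi.single i 1) trivial le_rfl) h1)
              rw [mon_single] at h2
              convert h2 using 1
              ring
          refine ⟨j + c * mon x e, add_mem hj (Ideal.mul_mem_left _ _ (Ideal.subset_span ⟨e, hec, rfl⟩)),
            ?_, ?_⟩
          · rw [← sub_sub]; exact h1
          · rw [← sub_sub]; exact sub_mem hjc (Ideal.mul_mem_left _ _ hec)
      · have h1 : (1 : R) ∈ J := Ideal.subset_span
          ⟨0, (mem_colon_iff hx).mpr fun i => (hd ⟨i⟩).elim, by simp [mon]⟩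
        refine ⟨f, ?_, by simp, by simp⟩
        simpa using Ideal.mul_mem_left J f h1
  obtain ⟨j, hj, hjF, -⟩ := claim n1 le_rfl
  have hle : F x w Set.univ n1 ≤ maximalIdeal R ^ N := by
    unfold F
    rw [Ideal.span_le]
    rintro _ ⟨e, ⟨-, he⟩, rfl⟩
    exact Ideal.pow_le_pow_right (hdeg e he) (mon_mem_pow hxm e)
  rw [← add_sub_cancel j f]
  exact Submodule.add_mem_sup hj (hle hjF)

end BurchAux

/-- Proposition 6.4: let `(R, m)` be a regular local ring of dimension `d` with regular system
of parameters `x₁, …, x_d`, and let `I` be a monomial ideal in the `xᵢ`. Then `I` is a Burch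
ideal if and only if there exist a monomial `m' ∈ (I : m)` and an index `i` such that
`xᵢ m' ∉ mI`. -/
theorem monomial_burch_characterization {R : Type*} [CommRing R] [IsNoetherianRing R]
    [IsLocalRing R] {d : ℕ} (x : Fin d → R)
    (hx : Ideal.span (Set.range x) = maximalIdeal R)
    (hdim : ringKrullDim R = (d : ℕ))
    (I : Ideal R)
    (hmono : ∃ E : Set (Fin d → ℕ), I = Ideal.span ((fun e => ∏ i, x i ^ e i) '' E)) :
    (maximalIdeal R * I ≠ maximalIdeal R * Submodule.colon I (maximalIdeal R)) ↔
      ∃ (e : Fin d → ℕ) (i : Fin d),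
        (∏ j, x j ^ e j) ∈ Submodule.colon I (maximalIdeal R) ∧
          x i * ∏ j, x j ^ e j ∉ maximalIdeal R * I := by
  have hle : I ≤ Submodule.colon I (maximalIdeal R : Set R) := Ideal.le_colon
  constructor
  · intro hne
    by_contra hcon
    push Not at hcon
    apply hne
    refine le_antisymm (Ideal.mul_mono_right hle) ?_
    refine (Ideal.mul_mono_right (BurchAux.colon_le hx hdim hmono)).trans ?_
    conv_lhs => rw [← hx]
    rw [Ideal.span_mul_span', Ideal.span_le]
    rintro _ ⟨_, ⟨i, rfl⟩, _, ⟨e, he, rfl⟩, rfl⟩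
    rw [hx] at he
    exact hcon e i he
  · rintro ⟨e, i, he, hi⟩ heq
    apply hi
    rw [heq]
    exact Ideal.mul_mem_mul (hx ▸ Ideal.subset_span ⟨i, rfl⟩) he
end
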